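/- Let d ≥ 2 and λ ∈ [0,1). Define V : H₊ → ℝ by V(x) = F(T x) − F(x*). Then there exists a class-KL function β such that for every x ∈ H₊ and every n ∈ ℕ, V(T^n x) ≤ β(V(x), n). -/

import Mathlib

noncomputable section

open Metric Set Filter

/-- Euclidean space `ℝ^d` with `d = d' + 2 ≥ 2`. -/
abbrev Euc (d : ℕ) := EuclideanSpace ℝ (Fin (d + 2))

/-- The standard basis vectors. -/
def e (d : ℕ) (j : Fin (d + 2)) : Euc d := EuclideanSpace.single j 1

/-- The Douglas–Rachford operator for the unit sphere and the line
`L_λ = {t e₁ + λ e₂}`, given by its explicit formula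
`T x = (x₁/‖x‖) e₁ + ((1 − 1/‖x‖) x₂ + λ) e₂ + (1 − 1/‖x‖) ∑_{j=3}^d x_j e_j`. -/
def DR (d : ℕ) (lam : ℝ) (x : Euc d) : Euc d :=
  (x 0 / ‖x‖) • e d 0 + ((1 - 1 / ‖x‖) * x 1 + lam) • e d 1 +
    ∑ j ∈ Finset.univ.filter (fun j : Fin (d + 2) => 2 ≤ (j : ℕ)),
      ((1 - 1 / ‖x‖) * x j) • e d j

/-- The intersection point `x* = √(1−λ²) e₁ + λ e₂`. -/
def xStar (d : ℕ) (lam : ℝ) : Euc d := Real.sqrt (1 - lam ^ 2) • e d 0 + lam • e d 1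

/-- The Lyapunov-type function of Benoist:
`F(x) = ½‖x − λe₂‖² − λ log(1 + √(1 − x₁²)) + λ√(1 − x₁²) + (λ−1) log x₁`. -/
def F (d : ℕ) (lam : ℝ) (x : Euc d) : ℝ :=
  (1 / 2) * ‖x - lam • e d 1‖ ^ 2 - lam * Real.log (1 + Real.sqrt (1 - (x 0) ^ 2)) +
    lam * Real.sqrt (1 - (x 0) ^ 2) + (lam - 1) * Real.log (x 0)

/-- `Δ = {x : 0 < x₁ ≤ 1}`. -/
def Delta (d : ℕ) : Set (Euc d) := {x | 0 < x 0 ∧ x 0 ≤ 1}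

/-- `H₊ = {x : x₁ > 0}`. -/
def Hplus (d : ℕ) : Set (Euc d) := {x | 0 < x 0}

/-- `V(x) = F(T x) − F(x*)` on `H₊`. -/
def V (d : ℕ) (lam : ℝ) (x : Euc d) : ℝ := F d lam (DR d lam x) - F d lam (xStar d lam)

/-- A function `β : [0,∞) × [0,∞) → [0,∞)` is of class `KL` if for every `t ≥ 0` the map
`s ↦ β(s,t)` is continuous, strictly increasing and `β(0,t) = 0`, and for every `s ≥ 0` the
map `t ↦ β(s,t)` is non-increasing and tends to `0` as `t → ∞`. -/
def IsClassKL (β : ℝ → ℝ → ℝ) : Prop :=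
  (∀ s t : ℝ, 0 ≤ s → 0 ≤ t → 0 ≤ β s t) ∧
  (∀ t : ℝ, 0 ≤ t → ContinuousOn (fun s => β s t) (Ici 0)) ∧
  (∀ t : ℝ, 0 ≤ t → StrictMonoOn (fun s => β s t) (Ici 0)) ∧
  (∀ t : ℝ, 0 ≤ t → β 0 t = 0) ∧
  (∀ s : ℝ, 0 ≤ s → AntitoneOn (fun t => β s t) (Ici 0)) ∧
  (∀ s : ℝ, 0 ≤ s → Tendsto (fun t => β s t) atTop (nhds 0))

/-!
Write `ρ` for the distance of `y ∈ Δ` to the first axis, `t = ρ / ‖y‖` and `s = √(1 - y₁²)`.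
In the coordinate `s` the function `F` is a quadratic form plus a one-variable profile, and
`F y - F (T y)` becomes a first-order Taylor remainder `R_λ(t, s)` of that profile plus
`(t - λ)² / 2 + λ (ρ - y₂)`. The remainder is affine and antitone in `λ`, and `R_t(t, ·) ≥ 0`
because the profile with parameter `t` is minimal at `t`. This settles `t ≥ λ`; for `t < λ` the
possibly negative remainder is absorbed by `(t - λ)² / 2`. Hence `F` strictly decreases along `T`
away from the fixed point `x*`.

Since the sublevel sets of `F` in `Δ` are compact, the decrease is uniform between two levels above
the minimum, so the supremum over a sublevel set of the values of `F - F(x*)` after `n` steps tends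
to `0`. Averaging this supremum over the levels in `[b, 2b]` makes it continuous in `b`, and adding
`b / (1 + n)` makes it strictly increasing.
-/

section Calculus

variable {f f' : ℝ → ℝ} {a b s t : ℝ}

theorem le_of_hasDerivAt_nonneg (hab : a ≤ b) (hf : ∀ v ∈ Icc a b, HasDerivAt f (f' v) v)
    (hf' : ∀ v ∈ Icc a b, 0 ≤ f' v) : f a ≤ f b :=
  monotoneOn_of_hasDerivWithinAt_nonneg (convex_Icc a b)
    (fun v hv => (hf v hv).continuousAt.continuousWithinAt)
    (fun v hv => (hf v (interior_subset hv)).hasDerivWithinAt)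
    (fun v hv => hf' v (interior_subset hv)) (left_mem_Icc.2 hab) (right_mem_Icc.2 hab) hab

theorem le_of_hasDerivAt_nonpos (hab : a ≤ b) (hf : ∀ v ∈ Icc a b, HasDerivAt f (f' v) v)
    (hf' : ∀ v ∈ Icc a b, f' v ≤ 0) : f b ≤ f a :=
  neg_le_neg_iff.1 <| le_of_hasDerivAt_nonneg (f := -f) hab (fun v hv => (hf v hv).neg)
    fun v hv => neg_nonneg.2 (hf' v hv)

theorem lt_of_hasDerivAt_of_sub_mul_pos {S : Set ℝ} (hS : Convex ℝ S)
    (hf : ∀ v ∈ S, HasDerivAt f (f' v) v)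
    (hpos : ∀ v ∈ interior S, v ≠ t → 0 < (v - t) * f' v)
    (ht : t ∈ S) (hs : s ∈ S) (hne : s ≠ t) : f t < f s := by
  have hcont : ContinuousOn f S := fun v hv => (hf v hv).continuousAt.continuousWithinAt
  rcases hne.lt_or_gt with hst | hts
  · have hsub : Icc s t ⊆ S := hS.ordConnected.out hs ht
    refine strictAntiOn_of_hasDerivWithinAt_neg (f' := f') (convex_Icc s t) (hcont.mono hsub)
      (fun v hv => (hf v (hsub (interior_subset hv))).hasDerivWithinAt) (fun v hv => ?_)
      (left_mem_Icc.2 hst.le) (right_mem_Icc.2 hst.le) hst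
    have hvt : v < t := by rw [interior_Icc] at hv; exact hv.2
    exact neg_of_mul_pos_right (hpos v (interior_mono hsub hv) hvt.ne) (sub_neg.2 hvt).le
  · have hsub : Icc t s ⊆ S := hS.ordConnected.out ht hs
    refine strictMonoOn_of_hasDerivWithinAt_pos (f' := f') (convex_Icc t s) (hcont.mono hsub)
      (fun v hv => (hf v (hsub (interior_subset hv))).hasDerivWithinAt) (fun v hv => ?_)
      (left_mem_Icc.2 hts.le) (right_mem_Icc.2 hts.le) hts
    have htv : t < v := by rw [interior_Icc] at hv; exact hv.1
    exact pos_of_mul_pos_right (hpos v (interior_mono hsub hv) htv.ne') (sub_pos.2 htv).le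

theorem min_le_of_hasDerivAt_mul_sub_quasiconcaveOn {w q : ℝ → ℝ}
    (hf : ∀ v ∈ Icc a b, HasDerivAt f (w v * (q b - q v)) v) (hw : ∀ v ∈ Icc a b, 0 ≤ w v)
    (hq : QuasiconcaveOn ℝ (Icc a b) q) (hs : s ∈ Icc a b) : min (f a) (f b) ≤ f s := by
  have hb : b ∈ {v ∈ Icc a b | q b ≤ q v} := ⟨right_mem_Icc.2 (hs.1.trans hs.2), le_rfl⟩
  rcases le_or_gt (q b) (q s) with hbs | hsb
  · have hsub : Icc s b ⊆ {v ∈ Icc a b | q b ≤ q v} := (hq (q b)).ordConnected.out ⟨hs, hbs⟩ hb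
    refine (min_le_right _ _).trans <| le_of_hasDerivAt_nonpos hs.2
      (fun v hv => hf v (hsub hv).1) fun v hv => ?_
    exact mul_nonpos_of_nonneg_of_nonpos (hw v (hsub hv).1) (sub_nonpos.2 (hsub hv).2)
  · have hsub : Icc a s ⊆ Icc a b := Icc_subset_Icc_right hs.2
    refine (min_le_left _ _).trans <| le_of_hasDerivAt_nonneg hs.1
      (fun v hv => hf v (hsub hv)) fun v hv => ?_
    refine mul_nonneg (hw v (hsub hv)) (sub_nonneg.2 (le_of_not_gt fun hbv => hsb.not_ge ?_))
    exact ((hq (q b)).ordConnected.out ⟨hsub hv, hbv.le⟩ hb ⟨hv.2, hs.2⟩).2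

end Calculus

section TanArcsin

open Real

variable {b s t v : ℝ}

theorem one_sub_sq_pos (hs : s ∈ Ioo (-1) 1) : 0 < 1 - s ^ 2 := by
  nlinarith [hs.1, hs.2]

/-- The slope `s / √(1 - s²)`, with closed form `tan (arcsin s)`; up to sign it is the derivative of
`s ↦ √(1 - s²)`. -/
def tanArcsin (s : ℝ) : ℝ := s / √(1 - s ^ 2)

theorem tanArcsin_nonneg (hs : 0 ≤ s) : 0 ≤ tanArcsin s := div_nonneg hs (sqrt_nonneg _)

theorem tanArcsin_pos (hs : s ∈ Ioo 0 1) : 0 < tanArcsin s :=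
  div_pos hs.1 (sqrt_pos.2 (one_sub_sq_pos ⟨by linarith [hs.1], hs.2⟩))

theorem tanArcsin_sq (hs : s ∈ Ioo (-1) 1) : tanArcsin s ^ 2 = s ^ 2 / (1 - s ^ 2) := by
  rw [tanArcsin, div_pow, sq_sqrt (one_sub_sq_pos hs).le]

theorem strictMonoOn_tanArcsin : StrictMonoOn tanArcsin (Ioo (-1) 1) := by
  have heq : tanArcsin = tan ∘ arcsin := funext fun s => (tan_arcsin s).symm
  rw [heq]
  refine strictMonoOn_tan.comp (strictMonoOn_arcsin.mono Ioo_subset_Icc_self) fun s hs => ?_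
  exact ⟨neg_pi_div_two_lt_arcsin.2 hs.1, arcsin_lt_pi_div_two.2 hs.2⟩

theorem hasDerivAt_sqrt_one_sub_sq (hs : s ∈ Ioo (-1) 1) :
    HasDerivAt (fun v : ℝ => √(1 - v ^ 2)) (-tanArcsin s) s := by
  refine (((hasDerivAt_pow 2 s).const_sub 1).sqrt (one_sub_sq_pos hs).ne').congr_deriv ?_
  have := sqrt_pos.2 (one_sub_sq_pos hs)
  rw [tanArcsin]
  field_simp
  norm_num

theorem sqrt_one_sub_sq_le_mul_one_add (ht : t ^ 2 ≤ 2 / 3) (hb : b ∈ Icc 0 1) :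
    √(1 - (t * (1 - b ^ 2)) ^ 2) ≤ √(1 - t ^ 2) * (1 + b) := by
  obtain ⟨hb0, hb1⟩ := hb
  have hcubic : 0 ≤ 2 - 3 * b + 2 * b ^ 3 := by
    nlinarith [mul_nonneg hb0 (sq_nonneg (b - 7 / 10)), sq_nonneg (b - 7 / 10)]
  have hweight : t ^ 2 * ((1 + b) ^ 2 * (2 - b)) ≤ 2 / 3 * ((1 + b) ^ 2 * (2 - b)) :=
    mul_le_mul_of_nonneg_right ht (mul_nonneg (sq_nonneg _) (by linarith))
  have hfactor : 0 ≤ b * ((2 + b) - t ^ 2 * ((1 + b) ^ 2 * (2 - b))) :=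
    mul_nonneg hb0 (by linarith)
  refine sqrt_le_iff.2 ⟨by positivity, ?_⟩
  rw [mul_pow √(1 - t ^ 2), sq_sqrt (by linarith)]
  linarith

theorem sq_tanArcsin_sub_le (ht : 0 < t) (ht2 : t ^ 2 ≤ 2 / 3) (hv : v ∈ Icc 0 t) :
    (tanArcsin t - tanArcsin v) ^ 2 ≤ t / (1 - t ^ 2) * (t - v) := by
  have ht' : t ∈ Ioo (-1) 1 := ⟨by linarith, by nlinarith⟩
  have hv' : v ∈ Ioo (-1) 1 := ⟨by linarith [hv.1], hv.2.trans_lt ht'.2⟩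
  have hmono : tanArcsin v ≤ tanArcsin t := strictMonoOn_tanArcsin.monotoneOn hv' ht' hv.2
  obtain ⟨b, hb, hvb⟩ : ∃ b ∈ Icc (0 : ℝ) 1, v = t * (1 - b ^ 2) := by
    have hvt : v / t ∈ Icc (0 : ℝ) 1 := ⟨div_nonneg hv.1 ht.le, (div_le_one ht).2 hv.2⟩
    refine ⟨√(1 - v / t), ⟨sqrt_nonneg _, sqrt_le_one.2 (by linarith [hvt.1])⟩, ?_⟩
    rw [sq_sqrt (by linarith [hvt.2])]
    field_simp
    ring
  have hlower : tanArcsin t * (1 - b) ≤ tanArcsin v := by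
    have hpt := sqrt_pos.2 (one_sub_sq_pos ht')
    have hpv := sqrt_pos.2 (one_sub_sq_pos hv')
    rw [tanArcsin, tanArcsin, div_mul_eq_mul_div, div_le_div_iff₀ hpt hpv]
    calc t * (1 - b) * √(1 - v ^ 2)
        ≤ t * (1 - b) * (√(1 - t ^ 2) * (1 + b)) := by
          refine mul_le_mul_of_nonneg_left ?_ (mul_nonneg ht.le (by linarith [hb.2]))
          rw [hvb]
          exact sqrt_one_sub_sq_le_mul_one_add ht2 hb
      _ = v * √(1 - t ^ 2) := by rw [hvb]; ring
  calc (tanArcsin t - tanArcsin v) ^ 2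
      ≤ (tanArcsin t * b) ^ 2 := pow_le_pow_left₀ (sub_nonneg.2 hmono) (by linarith) 2
    _ = t / (1 - t ^ 2) * (t - v) := by rw [mul_pow, tanArcsin_sq ht', hvb]; ring

theorem le_one_sub_mul_tanArcsin_iff {r : ℝ} (hr : 0 < r) (hv : v ∈ Ioo 0 1) :
    r ≤ (1 - v) * tanArcsin v ↔ v + r ^ 2 * (v ^ (-1 : ℤ) + v ^ (-2 : ℤ)) ≤ 1 := by
  obtain ⟨hv0, hv1⟩ := hv
  have hsq : ((1 - v) * tanArcsin v) ^ 2 = (1 - v) * (v ^ 2 / (1 + v)) := by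
    have hne : 1 - v ≠ 0 := by linarith
    rw [mul_pow, tanArcsin_sq ⟨by linarith, hv1⟩, show 1 - v ^ 2 = (1 - v) * (1 + v) by ring]
    field_simp
  have hsum : v ^ (-1 : ℤ) + v ^ (-2 : ℤ) = (1 + v) / v ^ 2 := by
    rw [zpow_neg_one, zpow_neg]
    norm_cast
    field_simp
    ring
  rw [← sq_le_sq₀ hr.le (mul_nonneg (by linarith) (tanArcsin_nonneg hv0.le)), hsq,
    ← le_sub_iff_add_le', hsum, ← mul_div_assoc, ← mul_div_assoc, le_div_iff₀ (by positivity),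
    div_le_iff₀ (by positivity)]

theorem quasiconcaveOn_one_sub_mul_tanArcsin :
    QuasiconcaveOn ℝ (Ico 0 1) fun v => (1 - v) * tanArcsin v := by
  intro r
  rcases le_or_gt r 0 with hr | hr
  · have hall : {v ∈ Ico (0 : ℝ) 1 | r ≤ (1 - v) * tanArcsin v} = Ico 0 1 :=
      sep_eq_self_iff_mem_true.2 fun v hv =>
        hr.trans (mul_nonneg (sub_nonneg.2 hv.2.le) (tanArcsin_nonneg hv.1))
    rw [hall]
    exact convex_Ico 0 1
  · have hconvex : ConvexOn ℝ (Ioo 0 1) fun v : ℝ => v + r ^ 2 * (v ^ (-1 : ℤ) + v ^ (-2 : ℤ)) :=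
      (convexOn_id (convex_Ioo 0 1)).add <|
        (((convexOn_zpow (-1)).add (convexOn_zpow (-2))).smul (sq_nonneg r)).subset
          Ioo_subset_Ioi_self (convex_Ioo 0 1)
    have hset : {v ∈ Ico (0 : ℝ) 1 | r ≤ (1 - v) * tanArcsin v} =
        {v ∈ Ioo (0 : ℝ) 1 | v + r ^ 2 * (v ^ (-1 : ℤ) + v ^ (-2 : ℤ)) ≤ 1} := by
      ext v
      refine ⟨fun ⟨hv, hrv⟩ => ?_, fun ⟨hv, hrv⟩ =>
        ⟨Ioo_subset_Ico_self hv, (le_one_sub_mul_tanArcsin_iff hr hv).2 hrv⟩⟩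
      have hv0 : v ≠ 0 := by
        rintro rfl
        exact (hrv.trans_eq (by simp [tanArcsin])).not_gt hr
      have hv' : v ∈ Ioo 0 1 := ⟨hv.1.lt_of_ne' hv0, hv.2⟩
      exact ⟨hv', (le_one_sub_mul_tanArcsin_iff hr hv').1 hrv⟩
    rw [hset]
    exact hconvex.convex_le 1

end TanArcsin

section Profile

open Real

variable {lam lam' s t : ℝ}

/-- The part of Benoist's function `F` that depends only on the first coordinate, written in the
variable `s = √(1 - x₁²)`. -/
def profile (lam s : ℝ) : ℝ :=
  (1 / 2) * (1 - s ^ 2) + lam * s - (lam + 1) / 2 * log (1 + s) - (1 - lam) / 2 * log (1 - s)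

theorem hasDerivAt_profile (lam : ℝ) (hs : s ∈ Ioo (-1) 1) :
    HasDerivAt (profile lam) ((s - lam) * tanArcsin s ^ 2) s := by
  have hadd : 1 + s ≠ 0 := by linarith [hs.1]
  have hsub : 1 - s ≠ 0 := by linarith [hs.2]
  have hquad := ((hasDerivAt_pow 2 s).const_sub 1).const_mul (1 / 2 : ℝ)
  have hlin := (hasDerivAt_id s).const_mul lam
  have hlogAdd := (((hasDerivAt_id s).const_add 1).log hadd).const_mul ((lam + 1) / 2)
  have hlogSub := (((hasDerivAt_id s).const_sub 1).log hsub).const_mul ((1 - lam) / 2)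
  refine (((hquad.add hlin).sub hlogAdd).sub hlogSub).congr_deriv ?_
  rw [tanArcsin_sq hs, show 1 - s ^ 2 = (1 - s) * (1 + s) by ring, id]
  field_simp
  ring

theorem profile_lt_profile (hlam : lam ∈ Ico 0 1) (hs : s ∈ Ico 0 1) (hne : s ≠ lam) :
    profile lam lam < profile lam s := by
  refine lt_of_hasDerivAt_of_sub_mul_pos (convex_Ico 0 1)
    (fun v hv => hasDerivAt_profile lam ⟨by linarith [hv.1], hv.2⟩) (fun v hv hv' => ?_) hlam hs hne
  rw [interior_Ico] at hv
  have hpos := tanArcsin_pos hv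
  have := sq_pos_of_ne_zero (sub_ne_zero.2 hv')
  rw [← mul_assoc, ← sq]
  positivity

/-- The first-order Taylor remainder, based at `√(1 - t²)`, of `profile lam` regarded as a function
of the coordinate `√(1 - s²)`; in that coordinate `profile lam` has derivative
`(lam - s) * tanArcsin s`. -/
def profileRemainder (lam t s : ℝ) : ℝ :=
  profile lam s - profile lam t + (lam - t) * t * (1 - √(1 - s ^ 2) / √(1 - t ^ 2))

theorem profileRemainder_right_self (lam : ℝ) (ht : t ∈ Ioo (-1) 1) :
    profileRemainder lam t t = 0 := by
  rw [profileRemainder, div_self (sqrt_pos.2 (one_sub_sq_pos ht)).ne']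
  ring

theorem profileRemainder_left_self (t s : ℝ) :
    profileRemainder t t s = profile t s - profile t t := by
  rw [profileRemainder]
  ring

theorem profileRemainder_left_self_nonneg (ht : t ∈ Ico 0 1) (hs : s ∈ Ico 0 1) :
    0 ≤ profileRemainder t t s := by
  rw [profileRemainder_left_self, sub_nonneg]
  rcases eq_or_ne s t with rfl | hne
  · exact le_rfl
  · exact (profile_lt_profile ht hs hne).le

theorem hasDerivAt_profileRemainder (lam t : ℝ) (hs : s ∈ Ioo (-1) 1) :
    HasDerivAt (profileRemainder lam t)
      ((s - lam) * tanArcsin s ^ 2 + (lam - t) * tanArcsin t * tanArcsin s) s := by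
  refine (((hasDerivAt_profile lam hs).sub_const _).add
    ((((hasDerivAt_sqrt_one_sub_sq hs).div_const _).const_sub 1).const_mul
      ((lam - t) * t))).congr_deriv ?_
  rw [tanArcsin, tanArcsin]
  ring

theorem one_sub_mul_profileRemainder (lam t s : ℝ) :
    (1 - t) * profileRemainder lam t s =
      (1 - lam) * profileRemainder t t s + (lam - t) * profileRemainder 1 t s := by
  simp only [profileRemainder, profile]
  ring

theorem profileRemainder_le_profileRemainder (hle : lam ≤ lam') (ht : t ∈ Ico 0 1)
    (hs : s ∈ Ico 0 1) : profileRemainder lam' t s ≤ profileRemainder lam t s := by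
  have ht' : t ∈ Ioo (-1) 1 := ⟨by linarith [ht.1], ht.2⟩
  rcases eq_or_ne s t with rfl | hst
  · rw [profileRemainder_right_self _ ht', profileRemainder_right_self _ ht']
  rcases hle.eq_or_lt with rfl | hlt
  · exact le_rfl
  have hmin : profileRemainder lam t t - profileRemainder lam' t t <
      profileRemainder lam t s - profileRemainder lam' t s := by
    refine lt_of_hasDerivAt_of_sub_mul_pos (convex_Ico 0 1) (fun v hv =>
      (hasDerivAt_profileRemainder lam t ⟨by linarith [hv.1], hv.2⟩).sub
        (hasDerivAt_profileRemainder lam' t ⟨by linarith [hv.1], hv.2⟩))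
      (fun v hv hvt => ?_) ht hs hst
    rw [interior_Ico] at hv
    have hv' : v ∈ Ioo (-1) 1 := ⟨by linarith [hv.1], hv.2⟩
    have hsign : 0 < (v - t) * (tanArcsin v - tanArcsin t) := by
      rcases hvt.lt_or_gt with h | h
      · exact mul_pos_of_neg_of_neg (sub_neg.2 h)
          (sub_neg.2 (strictMonoOn_tanArcsin hv' ht' h))
      · exact mul_pos (sub_pos.2 h) (sub_pos.2 (strictMonoOn_tanArcsin ht' hv' h))
    calc 0 < (lam' - lam) * tanArcsin v * ((v - t) * (tanArcsin v - tanArcsin t)) :=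
          mul_pos (mul_pos (sub_pos.2 hlt) (tanArcsin_pos hv)) hsign
      _ = _ := by ring
  rw [profileRemainder_right_self _ ht', profileRemainder_right_self _ ht'] at hmin
  linarith

end Profile

section DescentInequality

open Real

variable {lam s t : ℝ}

theorem profile_one_sub_ge (ht : 0 ≤ t) (hts : t ≤ s) (hs : s < 1) :
    -((s ^ 2 - t ^ 2) / 4) ≤ profile 1 s - profile 1 t := by
  suffices hmono : profile 1 t + 1 / 4 * t ^ 2 ≤ profile 1 s + 1 / 4 * s ^ 2 by linarith
  refine le_of_hasDerivAt_nonneg hts (fun v hv =>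
    (hasDerivAt_profile 1 ⟨by linarith [hv.1], by linarith [hv.2]⟩).add
      ((hasDerivAt_pow 2 v).const_mul (1 / 4 : ℝ))) fun v hv => ?_
  have hv0 : 0 ≤ v := ht.trans hv.1
  have hv1 : v < 1 := hv.2.trans_lt hs
  have hderiv : (v - 1) * tanArcsin v ^ 2 = -(v ^ 2 / (1 + v)) := by
    have hne : 1 - v ≠ 0 := by linarith
    rw [tanArcsin_sq ⟨by linarith, hv1⟩, show 1 - v ^ 2 = (1 - v) * (1 + v) by ring]
    field_simp
    ring
  have hbound : v ^ 2 / (1 + v) ≤ v / 2 := by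
    rw [div_le_div_iff₀ (by linarith) two_pos]
    nlinarith
  norm_num
  linarith

theorem profileRemainder_one_add_pos (ht : 0 ≤ t) (hts : t < s) (hs : s < 1) :
    0 < profileRemainder 1 t s + (1 - t) * (s - t) / 2 := by
  have hpt := one_sub_sq_pos (s := t) ⟨by linarith, by linarith⟩
  have hps := one_sub_sq_pos (s := s) ⟨by linarith, hs⟩
  obtain ⟨x, hx⟩ : ∃ x, x = √(1 - s ^ 2) / √(1 - t ^ 2) := ⟨_, rfl⟩
  have hxsq : (1 - t ^ 2) * (1 - x ^ 2) = s ^ 2 - t ^ 2 := by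
    rw [hx, div_pow, sq_sqrt hpt.le, sq_sqrt hps.le]
    field_simp
    ring
  have hgap : s ^ 2 - t ^ 2 ≤ 2 * (1 - t ^ 2) * (1 - x) := by nlinarith [sq_nonneg (1 - x)]
  have hprofile := profile_one_sub_ge ht hts.le hs
  have hpoly : 0 < (s - t) * ((1 - t) * (1 - s) + (1 - t ^ 2)) :=
    mul_pos (sub_pos.2 hts) (add_pos (mul_pos (by linarith) (by linarith)) hpt)
  have hscaled : 0 < (1 + t) * (4 * (profileRemainder 1 t s + (1 - t) * (s - t) / 2)) := by
    rw [profileRemainder, ← hx]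
    nlinarith [mul_le_mul_of_nonneg_left hgap ht, mul_le_mul_of_nonneg_left hprofile
      (by linarith : 0 ≤ 1 + t)]
  linarith [pos_of_mul_pos_right hscaled (by linarith : 0 ≤ 1 + t)]

theorem profileRemainder_add_half_sq_pos_of_lt_of_le (ht : 0 ≤ t) (hts : t < s)
    (hslam : s ≤ lam) (hlam : lam < 1) :
    0 < profileRemainder lam t s + (1 / 2) * (t - lam) ^ 2 := by
  have hone := profileRemainder_one_add_pos ht hts (hslam.trans_lt hlam)
  have hself := profileRemainder_left_self_nonneg (t := t) (s := s) ⟨ht, by linarith⟩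
    ⟨by linarith, by linarith⟩
  have hscaled : 0 < (1 - t) * (profileRemainder lam t s + (1 / 2) * (t - lam) ^ 2) := by
    rw [mul_add, one_sub_mul_profileRemainder]
    have hdefect : (lam - t) * ((1 - t) * (s - t)) ≤ (lam - t) * ((1 - t) * (lam - t)) := by
      gcongr <;> linarith
    nlinarith [mul_pos (by linarith : 0 < lam - t) hone,
      mul_nonneg (by linarith : 0 ≤ 1 - lam) hself]
  exact pos_of_mul_pos_right hscaled (by linarith)

theorem profileRemainder_param_le (ht : 0 ≤ t) (htlam : t ≤ lam) (hlams : lam ≤ s) (hs : s < 1) :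
    profileRemainder lam t lam ≤ profileRemainder lam t s := by
  refine le_of_hasDerivAt_nonneg hlams (fun v hv =>
    hasDerivAt_profileRemainder lam t ⟨by linarith [hv.1], by linarith [hv.2]⟩) fun v hv => ?_
  exact add_nonneg (mul_nonneg (sub_nonneg.2 hv.1) (sq_nonneg _)) <|
    mul_nonneg (mul_nonneg (sub_nonneg.2 htlam) (tanArcsin_nonneg ht))
      (tanArcsin_nonneg (ht.trans (htlam.trans hv.1)))

theorem profileRemainder_add_half_sq_pos_of_le_of_sq_lt (hs : 0 ≤ s) (hst : s ≤ t)
    (ht2 : t ^ 2 < 2 / 3) (htlam : t < lam) :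
    0 < profileRemainder lam t s + (1 / 2) * (t - lam) ^ 2 := by
  have ht1 : t < 1 := by nlinarith
  rcases (hs.trans hst).eq_or_lt with rfl | ht
  · obtain rfl : s = 0 := le_antisymm hst hs
    rw [profileRemainder_right_self _ (by norm_num)]
    nlinarith
  have hpt := one_sub_sq_pos (s := t) ⟨by linarith, ht1⟩
  obtain ⟨K, hK⟩ : ∃ K, K = t / (1 - t ^ 2) := ⟨_, rfl⟩
  have hK0 : 0 < K := hK ▸ div_pos ht hpt
  have hKt : K * t < 2 := by
    rw [hK, div_mul_eq_mul_div, div_lt_iff₀ hpt]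
    nlinarith
  have hmono : profileRemainder lam t t - (lam - t) ^ 2 * K / 4 * t ≤
      profileRemainder lam t s - (lam - t) ^ 2 * K / 4 * s := by
    refine le_of_hasDerivAt_nonpos hst (fun v hv =>
      (hasDerivAt_profileRemainder lam t ⟨by linarith [hv.1], by linarith [hv.2]⟩).sub
        ((hasDerivAt_id v).const_mul ((lam - t) ^ 2 * K / 4))) fun v hv => ?_
    -- AM-GM for `(t - v) p(v)²` and `(lam - t)² K / 4`, given `(p(t) - p(v))² ≤ K (t - v)`,
    -- where `p = tanArcsin`
    have hdiff := sq_tanArcsin_sub_le ht ht2.le ⟨hs.trans hv.1, hv.2⟩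
    rw [← hK] at hdiff
    have hscaled : 0 ≤ K * -((v - lam) * tanArcsin v ^ 2 +
        (lam - t) * tanArcsin t * tanArcsin v - (lam - t) ^ 2 * K / 4 * 1) := by
      nlinarith [mul_le_mul_of_nonneg_right hdiff (sq_nonneg (tanArcsin v)),
        sq_nonneg (tanArcsin v * (tanArcsin t - tanArcsin v) - (lam - t) * K / 2)]
    exact neg_nonneg.1 (nonneg_of_mul_nonneg_right hscaled hK0)
  rw [profileRemainder_right_self _ ⟨by linarith, ht1⟩] at hmono
  have hsmall : (lam - t) ^ 2 * (K * (t - s)) < (lam - t) ^ 2 * 2 :=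
    mul_lt_mul_of_pos_left (by nlinarith) (pow_pos (by linarith) 2)
  nlinarith

theorem log_le_half_sub_inv {u : ℝ} (hu : 1 ≤ u) : log u ≤ (u - u⁻¹) / 2 := by
  rw [← sinh_log (by linarith)]
  exact self_le_sinh_iff.2 (log_nonneg hu)

theorem log_one_add_ge (ht : t ∈ Ioc (-1) 1) :
    0.693147 - (2 / (1 + t) - (1 + t) / 2) / 2 ≤ log (1 + t) := by
  have hpos : 0 < 1 + t := by linarith [ht.1]
  have hlog := log_le_half_sub_inv (u := 2 / (1 + t)) (by rw [le_div_iff₀ hpos]; linarith [ht.2])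
  rw [inv_div, log_div two_ne_zero hpos.ne'] at hlog
  linarith [log_two_gt_d9]

theorem one_sub_div_sqrt_le (ht : t ∈ Ioo (-1) 1) {c : ℝ} (hc : 0 < c) :
    (1 - t) / √(1 - t ^ 2) ≤ (c + (1 - t) / (1 + t) / c) / 2 := by
  have hsq : ((1 - t) / √(1 - t ^ 2)) ^ 2 = (1 - t) / (1 + t) := by
    have hne : 1 - t ≠ 0 := by linarith [ht.2]
    rw [div_pow, sq_sqrt (one_sub_sq_pos ht).le, show 1 - t ^ 2 = (1 - t) * (1 + t) by ring]
    field_simp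
  rw [← hsq, le_div_iff₀ two_pos, ← sub_le_iff_le_add', le_div_iff₀ hc]
  nlinarith [sq_nonneg ((1 - t) / √(1 - t ^ 2) - c)]

theorem profileRemainder_one_zero (ht : t ∈ Ioo (-1) 1) :
    profileRemainder 1 t 0 = log (1 + t) - t ^ 2 / 2 - t * ((1 - t) / √(1 - t ^ 2)) := by
  have := sqrt_pos.2 (one_sub_sq_pos ht)
  rw [profileRemainder, profile, profile]
  norm_num
  ring

theorem profileRemainder_one_zero_nonneg (ht : 81 / 100 ≤ t) (ht1 : t < 1) :
    0 ≤ profileRemainder 1 t 0 := by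
  have hpos : 0 < 1 + t := by linarith
  have hmem : t ∈ Ioo (-1) 1 := ⟨by linarith, ht1⟩
  -- `31 / 100` approximates `√((1 - t) / (1 + t))` at the critical left end of the range of `t`
  have hsqrt := mul_le_mul_of_nonneg_left
    (one_sub_div_sqrt_le hmem (by norm_num : (0 : ℝ) < 31 / 100)) (by linarith : 0 ≤ t)
  have hlog := log_one_add_ge (Ioo_subset_Ioc_self hmem)
  have hrational : 0 ≤ 0.693147 - (2 / (1 + t) - (1 + t) / 2) / 2 - t ^ 2 / 2 -
      t * ((31 / 100 + (1 - t) / (1 + t) / (31 / 100)) / 2) := by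
    have hclear : 0.693147 - (2 / (1 + t) - (1 + t) / 2) / 2 - t ^ 2 / 2 -
        t * ((31 / 100 + (1 - t) / (1 + t) / (31 / 100)) / 2) =
        (0.693147 * (1 + t) - 1 + (1 + t) ^ 2 / 4 - t ^ 2 * (1 + t) / 2
          - t * (31 / 100 * (1 + t) + (1 - t) / (31 / 100)) / 2) / (1 + t) := by
      field_simp
      ring
    rw [hclear]
    have hprod := mul_nonneg (sub_nonneg.2 ht) (sub_nonneg.2 ht1.le)
    refine div_nonneg ?_ hpos.le
    nlinarith [mul_nonneg hprod (sub_nonneg.2 ht), mul_nonneg hprod (sub_nonneg.2 ht1.le)]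
  rw [profileRemainder_one_zero hmem]
  linarith

theorem profileRemainder_one_nonneg (ht : 81 / 100 ≤ t) (ht1 : t < 1) (hs : s ∈ Icc 0 t) :
    0 ≤ profileRemainder 1 t s := by
  have hmin : min (profileRemainder 1 t 0) (profileRemainder 1 t t) ≤ profileRemainder 1 t s := by
    refine min_le_of_hasDerivAt_mul_sub_quasiconcaveOn (w := tanArcsin)
      (q := fun v => (1 - v) * tanArcsin v) (fun v hv => ?_) (fun v hv => tanArcsin_nonneg hv.1)
      ((convex_Icc 0 t).quasiconcaveOn_restrict quasiconcaveOn_one_sub_mul_tanArcsin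
        (Icc_subset_Ico_right ht1)) hs
    refine (hasDerivAt_profileRemainder 1 t
      ⟨by linarith [hv.1], hv.2.trans_lt ht1⟩).congr_deriv ?_
    ring
  rw [profileRemainder_right_self 1 ⟨by linarith, ht1⟩] at hmin
  exact (le_min (profileRemainder_one_zero_nonneg ht ht1) le_rfl).trans hmin

theorem profileRemainder_add_half_sq_pos_of_lt (ht : 0 ≤ t) (hs : s ∈ Ico 0 1) (htlam : t < lam)
    (hlam : lam < 1) :
    0 < profileRemainder lam t s + (1 / 2) * (t - lam) ^ 2 := by
  rcases le_or_gt s t with hst | hts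
  · rcases lt_or_ge (t ^ 2) (2 / 3) with ht2 | ht2
    · exact profileRemainder_add_half_sq_pos_of_le_of_sq_lt hs.1 hst ht2 htlam
    · have hone := profileRemainder_one_nonneg (by nlinarith) (htlam.trans hlam) ⟨hs.1, hst⟩
      have hle := profileRemainder_le_profileRemainder hlam.le ⟨ht, htlam.trans hlam⟩ hs
      nlinarith
  · rcases le_total s lam with hslam | hlams
    · exact profileRemainder_add_half_sq_pos_of_lt_of_le ht hts hslam hlam
    · have hparam := profileRemainder_param_le ht htlam.le hlams hs.2
      linarith [profileRemainder_add_half_sq_pos_of_lt_of_le ht htlam le_rfl hlam]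

theorem profileRemainder_add_half_sq_pos (hlam : lam ∈ Ico 0 1) (ht : t ∈ Ico 0 1)
    (hs : s ∈ Ico 0 1) (hne : ¬(s = lam ∧ t = lam)) :
    0 < profileRemainder lam t s + (1 / 2) * (t - lam) ^ 2 := by
  rcases lt_trichotomy t lam with htlam | rfl | hlamt
  · exact profileRemainder_add_half_sq_pos_of_lt ht.1 hs htlam hlam.2
  · rw [profileRemainder_left_self]
    have := profile_lt_profile hlam hs fun h => hne ⟨h, rfl⟩
    linarith [sq_nonneg (t - t)]
  · have hself := profileRemainder_left_self_nonneg ht hs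
    have hle := profileRemainder_le_profileRemainder hlamt.le ht hs
    nlinarith

end DescentInequality

section DilationAverage

open MeasureTheory

variable {f g : ℝ → ℝ} {s : ℝ}

/-- The average of `f` over the dilations `[s, 2s]` of `[1, 2]`: a continuous majorant of a
monotone function that is still controlled by its value at `2s`. -/
def dilationAverage (f : ℝ → ℝ) (s : ℝ) : ℝ := ∫ τ in (1 : ℝ)..2, f (s * τ)

theorem intervalIntegrable_comp_mul_left (hf : Monotone f) (hs : 0 ≤ s) (a b : ℝ) :
    IntervalIntegrable (fun τ => f (s * τ)) volume a b :=
  (hf.comp (monotone_mul_left_of_nonneg hs)).intervalIntegrable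

theorem dilationAverage_const (c s : ℝ) : dilationAverage (fun _ => c) s = c := by
  norm_num [dilationAverage]

theorem dilationAverage_le_dilationAverage (hf : Monotone f) (hg : Monotone g) (hfg : f ≤ g)
    (hs : 0 ≤ s) : dilationAverage f s ≤ dilationAverage g s :=
  intervalIntegral.integral_mono_on one_le_two (intervalIntegrable_comp_mul_left hf hs 1 2)
    (intervalIntegrable_comp_mul_left hg hs 1 2) fun τ _ => hfg (s * τ)

theorem monotoneOn_dilationAverage (hf : Monotone f) :
    MonotoneOn (dilationAverage f) (Ici 0) := fun _ hs _ hs' hle =>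
  intervalIntegral.integral_mono_on one_le_two (intervalIntegrable_comp_mul_left hf hs 1 2)
    (intervalIntegrable_comp_mul_left hf hs' 1 2) fun _ hτ =>
      hf (mul_le_mul_of_nonneg_right hle (zero_le_one.trans hτ.1))

theorem le_dilationAverage (hf : Monotone f) (hs : 0 ≤ s) : f s ≤ dilationAverage f s := by
  rw [← dilationAverage_const (f s) s]
  exact intervalIntegral.integral_mono_on one_le_two (by simp)
    (intervalIntegrable_comp_mul_left hf hs 1 2) fun τ hτ => hf (le_mul_of_one_le_right hs hτ.1)

theorem dilationAverage_le (hf : Monotone f) (hs : 0 ≤ s) : dilationAverage f s ≤ f (s * 2) := by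
  rw [← dilationAverage_const (f (s * 2)) s]
  exact intervalIntegral.integral_mono_on one_le_two (intervalIntegrable_comp_mul_left hf hs 1 2)
    (by simp) fun τ hτ => hf (mul_le_mul_of_nonneg_left hτ.2 hs)

theorem dilationAverage_zero (f : ℝ → ℝ) : dilationAverage f 0 = f 0 := by
  norm_num [dilationAverage]

theorem continuousAt_dilationAverage (hf : Monotone f) (hs : 0 < s) :
    ContinuousAt (dilationAverage f) s := by
  have hint : ∀ a b, IntervalIntegrable f volume a b := fun _ _ => hf.intervalIntegrable
  have hprim : Continuous fun x => ∫ τ in (0 : ℝ)..x, f τ :=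
    intervalIntegral.continuous_primitive hint 0
  have hquot : ContinuousAt
      (fun x : ℝ => x⁻¹ * ((∫ τ in (0 : ℝ)..(x * 2), f τ) - ∫ τ in (0 : ℝ)..(x * 1), f τ)) s :=
    (continuousAt_inv₀ hs.ne').mul ((hprim.comp (continuous_mul_const 2)).sub
      (hprim.comp (continuous_mul_const 1))).continuousAt
  refine hquot.congr ?_
  filter_upwards [lt_mem_nhds hs] with x hx
  rw [dilationAverage, intervalIntegral.integral_comp_mul_left f hx.ne', smul_eq_mul,
    intervalIntegral.integral_interval_sub_left (hint _ _) (hint _ _)]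

theorem continuousOn_dilationAverage (hf : Monotone f) (hf0 : ContinuousWithinAt f (Ici 0) 0) :
    ContinuousOn (dilationAverage f) (Ici 0) := by
  intro s hs
  rcases (mem_Ici.1 hs).eq_or_lt with rfl | hpos
  · have hdouble : Tendsto (fun s : ℝ => f (s * 2)) (nhdsWithin 0 (Ici 0)) (nhds (f 0)) := by
      refine hf0.tendsto.comp (tendsto_nhdsWithin_iff.2 ⟨?_, ?_⟩)
      · exact ((continuous_mul_const (2 : ℝ)).tendsto' 0 0 (zero_mul 2)).mono_left
          nhdsWithin_le_nhds
      · filter_upwards [self_mem_nhdsWithin] with x hx using mul_nonneg (mem_Ici.1 hx) zero_le_two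
    rw [ContinuousWithinAt, dilationAverage_zero]
    refine tendsto_of_tendsto_of_tendsto_of_le_of_le' hf0.tendsto hdouble ?_ ?_
    · filter_upwards [self_mem_nhdsWithin] with x hx using le_dilationAverage hf hx
    · filter_upwards [self_mem_nhdsWithin] with x hx using dilationAverage_le hf hx
  · exact (continuousAt_dilationAverage hf hpos).continuousWithinAt

end DilationAverage

section ClassKL

variable {a : ℕ → ℝ → ℝ} {s : ℝ}

theorem tendsto_dilationAverage_zero (hmono : ∀ n, Monotone (a n)) (hs : 0 ≤ s)
    (hnonneg : ∀ n, 0 ≤ a n s) (hlim : Tendsto (fun n => a n (s * 2)) atTop (nhds 0)) :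
    Tendsto (fun n => dilationAverage (a n) s) atTop (nhds 0) :=
  squeeze_zero (fun n => (hnonneg n).trans (le_dilationAverage (hmono n) hs))
    (fun n => dilationAverage_le (hmono n) hs) hlim

theorem continuousWithinAt_zero_of_nonneg_of_le_id {f : ℝ → ℝ} (hnonneg : ∀ s, 0 ≤ s → 0 ≤ f s)
    (hle : ∀ s, 0 ≤ s → f s ≤ s) : ContinuousWithinAt f (Ici 0) 0 := by
  rw [ContinuousWithinAt, le_antisymm (hle 0 le_rfl) (hnonneg 0 le_rfl)]
  refine tendsto_of_tendsto_of_tendsto_of_le_of_le' tendsto_const_nhds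
    (tendsto_id.mono_left nhdsWithin_le_nhds) ?_ ?_
  · filter_upwards [self_mem_nhdsWithin] with x hx using hnonneg x hx
  · filter_upwards [self_mem_nhdsWithin] with x hx using hle x hx

theorem isClassKL_dilationAverage_add_div (hmono : ∀ n, Monotone (a n))
    (hnonneg : ∀ n s, 0 ≤ s → 0 ≤ a n s) (hle : ∀ n s, 0 ≤ s → a n s ≤ s) (hanti : Antitone a)
    (hlim : ∀ s, 0 ≤ s → Tendsto (fun n => a n s) atTop (nhds 0)) :
    IsClassKL fun s t => dilationAverage (a ⌊t⌋₊) s + s / (1 + t) := by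
  refine ⟨fun s t hs ht => ?_, fun t _ => ?_, fun t ht s hs s' hs' hss' => ?_, fun t _ => ?_,
    fun s hs t ht t' _ htt' => ?_, fun s hs => ?_⟩
  · exact add_nonneg ((hnonneg _ s hs).trans (le_dilationAverage (hmono _) hs))
      (div_nonneg hs (by linarith))
  · exact (continuousOn_dilationAverage (hmono _) <| continuousWithinAt_zero_of_nonneg_of_le_id
      (hnonneg _) (hle _)).add (continuousOn_id.div_const _)
  · have : 0 < 1 + t := by linarith
    exact add_lt_add_of_le_of_lt (monotoneOn_dilationAverage (hmono _) hs hs' hss'.le)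
      (div_lt_div_of_pos_right hss' this)
  · simp only [dilationAverage_zero, zero_div, add_zero]
    exact le_antisymm (hle _ 0 le_rfl) (hnonneg _ 0 le_rfl)
  · have : 0 < 1 + t := by linarith [mem_Ici.1 ht]
    exact add_le_add (dilationAverage_le_dilationAverage (hmono _) (hmono _)
      (hanti (Nat.floor_mono htt')) hs) (div_le_div_of_nonneg_left hs this (by linarith))
  · have haverage := tendsto_dilationAverage_zero hmono hs (fun n => hnonneg n s hs)
      (hlim (s * 2) (by linarith))
    simpa only [Function.comp_def, id, add_zero] using
      (haverage.comp (tendsto_nat_floor_atTop (α := ℝ))).add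
        ((tendsto_atTop_add_const_left atTop 1 tendsto_id).const_div_atTop s)

theorem exists_isClassKL_ge (hmono : ∀ n, Monotone (a n))
    (hnonneg : ∀ n s, 0 ≤ s → 0 ≤ a n s) (hle : ∀ n s, 0 ≤ s → a n s ≤ s) (hanti : Antitone a)
    (hlim : ∀ s, 0 ≤ s → Tendsto (fun n => a n s) atTop (nhds 0)) :
    ∃ β : ℝ → ℝ → ℝ, IsClassKL β ∧ ∀ s, 0 ≤ s → ∀ n : ℕ, a n s ≤ β s n := by
  refine ⟨_, isClassKL_dilationAverage_add_div hmono hnonneg hle hanti hlim, fun s hs n => ?_⟩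
  rw [Nat.floor_natCast]
  exact le_add_of_le_of_nonneg (le_dilationAverage (hmono n) hs) (by positivity)

end ClassKL

section Lyapunov

variable {X : Type*} {D : Set X} {T : X → X} {W : X → ℝ} {b s ε : ℝ} {n : ℕ} {x : X}

theorem antitone_comp_iterate (hT : MapsTo T D D) (hWT : ∀ x ∈ D, W (T x) ≤ W x) (hx : x ∈ D) :
    Antitone fun n => W (T^[n] x) := by
  refine antitone_nat_of_succ_le fun n => ?_
  rw [Function.iterate_succ_apply']
  exact hWT _ (hT.iterate n hx)

theorem exists_pos_forall_comp_add_le [TopologicalSpace X] (hT : MapsTo T D D)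
    (hTc : ContinuousOn T D) (hWc : ContinuousOn W D) (hlt : ∀ x ∈ D, 0 < W x → W (T x) < W x)
    (hcompact : IsCompact {x ∈ D | W x ≤ b}) (hε : 0 < ε) :
    ∃ η, 0 < η ∧ ∀ x ∈ D, ε ≤ W x → W x ≤ b → W (T x) + η ≤ W x := by
  have hsub : {x ∈ D | W x ≤ b} ⊆ D := sep_subset D _
  obtain ⟨u, hu, hu'⟩ := continuousOn_iff_isClosed.1 (hWc.mono hsub) (Ici ε) isClosed_Ici
  have hband : IsCompact ({x ∈ D | W x ≤ b} ∩ W ⁻¹' Ici ε) := by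
    rw [inter_comm, hu', inter_comm]
    exact hcompact.inter_right hu
  have hdrop : ContinuousOn (fun x => W x - W (T x)) D := hWc.sub (hWc.comp hTc hT)
  obtain ⟨η, hη, hηle⟩ := hband.exists_forall_le' (a := 0)
    (hdrop.mono (inter_subset_left.trans hsub)) fun x hx =>
      sub_pos.2 (hlt x hx.1.1 (hε.trans_le hx.2))
  exact ⟨η, hη, fun x hx hεx hxb => by linarith [hηle x ⟨⟨hx, hxb⟩, hεx⟩]⟩

theorem exists_forall_iterate_le [TopologicalSpace X] (hT : MapsTo T D D) (hTc : ContinuousOn T D)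
    (hWc : ContinuousOn W D) (hle : ∀ x ∈ D, W (T x) ≤ W x)
    (hlt : ∀ x ∈ D, 0 < W x → W (T x) < W x)
    (hcompact : IsCompact {x ∈ D | W x ≤ b}) (hε : 0 < ε) :
    ∃ N : ℕ, ∀ n ≥ N, ∀ x ∈ D, W x ≤ b → W (T^[n] x) ≤ ε := by
  obtain ⟨η, hη, hdrop⟩ := exists_pos_forall_comp_add_le hT hTc hWc hlt hcompact hε
  obtain ⟨N, hN⟩ := exists_nat_gt ((b - ε) / η)
  rw [div_lt_iff₀ hη] at hN
  refine ⟨N, fun n hn x hx hxb => (antitone_comp_iterate hT hle hx hn).trans ?_⟩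
  by_contra! hgt
  have hlinear : ∀ k ≤ N, W (T^[k] x) + k * η ≤ b := by
    intro k hk
    induction k with
    | zero => simpa using hxb
    | succ k ih =>
      have hlower := antitone_comp_iterate hT hle hx (Nat.le_of_succ_le hk)
      have hupper := antitone_comp_iterate hT hle hx (Nat.zero_le k)
      have hstep := hdrop _ (hT.iterate k hx) (hgt.le.trans hlower) (hupper.trans hxb)
      rw [Function.iterate_succ_apply']
      push_cast
      linarith [ih (Nat.le_of_succ_le hk)]
  linarith [hlinear N le_rfl]

/-- The supremum of `W` after `n` steps of `T` over all starting points in the sublevel set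
`{x ∈ D | W x ≤ s}`; it is `0` when that set is empty. -/
def orbitSup (D : Set X) (T : X → X) (W : X → ℝ) (n : ℕ) (s : ℝ) : ℝ :=
  sSup ((fun x => W (T^[n] x)) '' {x ∈ D | W x ≤ s})

theorem iterate_le_orbitSup (hT : MapsTo T D D) (hle : ∀ x ∈ D, W (T x) ≤ W x) (hx : x ∈ D)
    (hxs : W x ≤ s) (n : ℕ) : W (T^[n] x) ≤ orbitSup D T W n s := by
  refine le_csSup ⟨s, ?_⟩ (mem_image_of_mem _ ⟨hx, hxs⟩)
  rintro _ ⟨y, ⟨hy, hys⟩, rfl⟩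
  exact (antitone_comp_iterate hT hle hy (Nat.zero_le n)).trans hys

theorem orbitSup_le {c : ℝ} (hc : 0 ≤ c) (h : ∀ x ∈ D, W x ≤ s → W (T^[n] x) ≤ c) :
    orbitSup D T W n s ≤ c :=
  Real.sSup_le (forall_mem_image.2 fun x hx => h x hx.1 hx.2) hc

theorem orbitSup_nonneg (hT : MapsTo T D D) (hW : ∀ x ∈ D, 0 ≤ W x) (n : ℕ) (s : ℝ) :
    0 ≤ orbitSup D T W n s :=
  Real.sSup_nonneg (forall_mem_image.2 fun _ hx => hW _ (hT.iterate n hx.1))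

theorem monotone_orbitSup (hT : MapsTo T D D) (hle : ∀ x ∈ D, W (T x) ≤ W x)
    (hW : ∀ x ∈ D, 0 ≤ W x) (n : ℕ) : Monotone (orbitSup D T W n) := fun _ s' hss' =>
  orbitSup_le (orbitSup_nonneg hT hW n s') fun _ hx hxs =>
    iterate_le_orbitSup hT hle hx (hxs.trans hss') n

theorem antitone_orbitSup (hT : MapsTo T D D) (hle : ∀ x ∈ D, W (T x) ≤ W x)
    (hW : ∀ x ∈ D, 0 ≤ W x) : Antitone (orbitSup D T W) := fun n _ hnm s =>
  orbitSup_le (orbitSup_nonneg hT hW n s) fun _ hx hxs =>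
    (antitone_comp_iterate hT hle hx hnm).trans (iterate_le_orbitSup hT hle hx hxs n)

theorem orbitSup_le_self (hT : MapsTo T D D) (hle : ∀ x ∈ D, W (T x) ≤ W x) (hs : 0 ≤ s) (n : ℕ) :
    orbitSup D T W n s ≤ s :=
  orbitSup_le hs fun _ hx hxs => (antitone_comp_iterate hT hle hx (Nat.zero_le n)).trans hxs

theorem tendsto_orbitSup [TopologicalSpace X] (hT : MapsTo T D D) (hTc : ContinuousOn T D)
    (hWc : ContinuousOn W D) (hW : ∀ x ∈ D, 0 ≤ W x) (hle : ∀ x ∈ D, W (T x) ≤ W x)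
    (hlt : ∀ x ∈ D, 0 < W x → W (T x) < W x) (hcompact : IsCompact {x ∈ D | W x ≤ s}) :
    Tendsto (fun n => orbitSup D T W n s) atTop (nhds 0) := by
  rw [Metric.tendsto_atTop]
  intro ε hε
  obtain ⟨N, hN⟩ := exists_forall_iterate_le hT hTc hWc hle hlt hcompact (half_pos hε)
  refine ⟨N, fun n hn => ?_⟩
  rw [Real.dist_0_eq_abs, abs_of_nonneg (orbitSup_nonneg hT hW n s)]
  exact (orbitSup_le (half_pos hε).le (hN n hn)).trans_lt (half_lt_self hε)

theorem exists_isClassKL_of_lyapunov [TopologicalSpace X] (hT : MapsTo T D D)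
    (hTc : ContinuousOn T D) (hWc : ContinuousOn W D) (hW : ∀ x ∈ D, 0 ≤ W x)
    (hle : ∀ x ∈ D, W (T x) ≤ W x) (hlt : ∀ x ∈ D, 0 < W x → W (T x) < W x)
    (hcompact : ∀ b, IsCompact {x ∈ D | W x ≤ b}) :
    ∃ β : ℝ → ℝ → ℝ, IsClassKL β ∧ ∀ x ∈ D, ∀ n : ℕ, W (T^[n] x) ≤ β (W x) n := by
  obtain ⟨β, hβ, hge⟩ := exists_isClassKL_ge (a := orbitSup D T W) (monotone_orbitSup hT hle hW)
    (fun n s _ => orbitSup_nonneg hT hW n s) (fun n s hs => orbitSup_le_self hT hle hs n)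
    (antitone_orbitSup hT hle hW) fun s _ => tendsto_orbitSup hT hTc hWc hW hle hlt (hcompact s)
  exact ⟨β, hβ, fun x hx n => (iterate_le_orbitSup hT hle hx le_rfl n).trans (hge _ (hW x hx) n)⟩

end Lyapunov

section Geometry

open Real

variable {d : ℕ} {lam : ℝ} {x y : Euc d}

theorem e_apply (i j : Fin (d + 2)) : e d i j = if j = i then 1 else 0 := by simp [e]

theorem norm_e (j : Fin (d + 2)) : ‖e d j‖ = 1 := by simp [e]

theorem inner_e (x : Euc d) (j : Fin (d + 2)) : inner ℝ x (e d j) = x j := by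
  simp [e, EuclideanSpace.inner_single_right]

theorem norm_sub_smul_e_sq (x : Euc d) (c : ℝ) (j : Fin (d + 2)) :
    ‖x - c • e d j‖ ^ 2 = ‖x‖ ^ 2 - 2 * c * x j + c ^ 2 := by
  rw [norm_sub_sq_real, inner_smul_right, inner_e, norm_smul, norm_e, mul_one, norm_eq_abs, sq_abs]
  ring

theorem norm_pos_of_mem_Hplus (hy : y ∈ Hplus d) : 0 < ‖y‖ := by
  rw [norm_pos_iff]
  rintro rfl
  exact lt_irrefl (0 : ℝ) hy

theorem Delta_subset_Hplus : Delta d ⊆ Hplus d := fun _ hy => hy.1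

/-- The distance of `y` to the axis spanned by `e₁`. -/
def axisDist (y : Euc d) : ℝ := ‖y - y 0 • e d 0‖

theorem axisDist_nonneg (y : Euc d) : 0 ≤ axisDist y := norm_nonneg _

theorem axisDist_sq (y : Euc d) : axisDist y ^ 2 = ‖y‖ ^ 2 - y 0 ^ 2 := by
  rw [axisDist, norm_sub_smul_e_sq]
  ring

theorem abs_apply_one_le_axisDist (y : Euc d) : |y 1| ≤ axisDist y := by
  have hinner : inner ℝ (y - y 0 • e d 0) (e d 1) = y 1 := by simp [inner_e, e_apply]
  calc |y 1| ≤ ‖y - y 0 • e d 0‖ * ‖e d 1‖ := hinner ▸ abs_real_inner_le_norm _ _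
    _ = axisDist y := by rw [norm_e, mul_one, axisDist]

/-- The sine of the angle between `y` and the first coordinate axis (`0` at `y = 0`). -/
def axisSin (y : Euc d) : ℝ := axisDist y / ‖y‖

theorem axisSin_nonneg (y : Euc d) : 0 ≤ axisSin y :=
  div_nonneg (axisDist_nonneg y) (norm_nonneg y)

theorem one_sub_axisSin_sq (hy : y ∈ Hplus d) : 1 - axisSin y ^ 2 = (y 0 / ‖y‖) ^ 2 := by
  have hnorm := norm_pos_of_mem_Hplus hy
  rw [axisSin, div_pow, div_pow, axisDist_sq]
  field_simp
  ring

theorem axisSin_mem_Ico (hy : y ∈ Hplus d) : axisSin y ∈ Ico 0 1 := by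
  have hcos : 0 < (y 0 / ‖y‖) ^ 2 := pow_pos (div_pos hy (norm_pos_of_mem_Hplus hy)) 2
  refine ⟨axisSin_nonneg y, ?_⟩
  nlinarith [one_sub_axisSin_sq hy]

theorem sqrt_one_sub_apply_zero_sq_mem_Ico (hy : y ∈ Hplus d) : √(1 - y 0 ^ 2) ∈ Ico 0 1 := by
  have hpos : 0 < y 0 ^ 2 := pow_pos hy 2
  exact ⟨sqrt_nonneg _, (sqrt_lt' one_pos).2 (by linarith)⟩

theorem one_sub_apply_zero_sq_nonneg (hy : y ∈ Delta d) : 0 ≤ 1 - y 0 ^ 2 :=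
  sub_nonneg.2 (pow_le_one₀ hy.1.le hy.2)

theorem sqrt_one_sub_sq_sqrt (hy : y ∈ Delta d) : √(1 - √(1 - y 0 ^ 2) ^ 2) = y 0 := by
  rw [sq_sqrt (one_sub_apply_zero_sq_nonneg hy), sub_sub_cancel, sqrt_sq hy.1.le]

theorem DR_eq (lam : ℝ) (x : Euc d) : DR d lam x =
    (1 - 1 / ‖x‖) • (x - x 0 • e d 0) + (x 0 / ‖x‖) • e d 0 + lam • e d 1 := by
  have hsum : ∀ j, (∑ k ∈ Finset.univ.filter (fun k : Fin (d + 2) => 2 ≤ (k : ℕ)),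
      ((1 - 1 / ‖x‖) * x k) • e d k) j = if 2 ≤ (j : ℕ) then (1 - 1 / ‖x‖) * x j else 0 := by
    intro j
    simp [e_apply, Finset.sum_ite_eq, WithLp.ofLp_sum, Finset.sum_apply]
  ext j
  simp only [DR, PiLp.add_apply, PiLp.sub_apply, PiLp.smul_apply, smul_eq_mul, hsum, e_apply]
  rcases eq_or_ne j 0 with rfl | hj0
  · simp
  rcases eq_or_ne j 1 with rfl | hj1
  · simp
  · have hj : 2 ≤ (j : ℕ) := by
      simp only [ne_eq, Fin.ext_iff, Fin.val_zero, Fin.val_one] at hj0 hj1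
      omega
    simp [hj0, hj1, hj]

theorem DR_apply_zero (lam : ℝ) (x : Euc d) : DR d lam x 0 = x 0 / ‖x‖ := by
  simp [DR_eq, e_apply]

theorem DR_mem_Delta (lam : ℝ) (hx : x ∈ Hplus d) : DR d lam x ∈ Delta d := by
  have hnorm := norm_pos_of_mem_Hplus hx
  rw [Delta, mem_ofPred_eq, DR_apply_zero]
  refine ⟨div_pos hx hnorm, (div_le_one hnorm).2 ?_⟩
  exact (le_abs_self _).trans (PiLp.norm_apply_le x 0)

theorem norm_DR_sub_sq (lam : ℝ) (hx : x ∈ Hplus d) :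
    ‖DR d lam x - lam • e d 1‖ ^ 2 = (axisDist x - axisSin x) ^ 2 + (x 0 / ‖x‖) ^ 2 := by
  have hnorm := norm_pos_of_mem_Hplus hx
  have horth : inner ℝ (x - x 0 • e d 0) (e d 0) = 0 := by simp [inner_e, e_apply]
  rw [DR_eq, add_sub_cancel_right, norm_add_sq_real, inner_smul_left, inner_smul_right, horth,
    norm_smul, norm_smul, norm_e, mul_pow, norm_eq_abs, norm_eq_abs, mul_one, sq_abs, sq_abs,
    ← axisDist, axisSin]
  field_simp
  ring

theorem F_eq_profile (lam : ℝ) (hy : y ∈ Delta d) : F d lam y =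
    (1 / 2) * (‖y - lam • e d 1‖ ^ 2 - y 0 ^ 2) + profile lam √(1 - y 0 ^ 2) := by
  have hsq := sq_sqrt (one_sub_apply_zero_sq_nonneg hy)
  obtain ⟨hs0, hs1⟩ := sqrt_one_sub_apply_zero_sq_mem_Ico (Delta_subset_Hplus hy)
  have hlog : log (y 0) = (log (1 + √(1 - y 0 ^ 2)) + log (1 - √(1 - y 0 ^ 2))) / 2 := by
    rw [← log_mul (by linarith) (by linarith), ← sq_sub_sq, one_pow, hsq, sub_sub_cancel, log_pow]
    push_cast
    ring
  rw [F, profile, hlog, hsq]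
  ring

theorem F_sub_F_DR (lam : ℝ) (hy : y ∈ Delta d) : F d lam y - F d lam (DR d lam y) =
    profileRemainder lam (axisSin y) √(1 - y 0 ^ 2) + (1 / 2) * (axisSin y - lam) ^ 2 +
      lam * (axisDist y - y 1) := by
  have hyH := Delta_subset_Hplus hy
  have hnorm := norm_pos_of_mem_Hplus hyH
  have hcos := one_sub_axisSin_sq hyH
  have hratio : axisSin y * (√(1 - √(1 - y 0 ^ 2) ^ 2) / √(1 - axisSin y ^ 2)) = axisDist y := by
    have hy0 := hy.1.ne'
    rw [sqrt_one_sub_sq_sqrt hy, hcos, sqrt_sq (div_nonneg hy.1.le hnorm.le), axisSin]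
    field_simp
  rw [F_eq_profile lam hy, F_eq_profile lam (DR_mem_Delta lam hyH), norm_sub_smul_e_sq,
    norm_DR_sub_sq lam hyH, DR_apply_zero, ← hcos, sub_sub_cancel, sqrt_sq (axisSin_nonneg y),
    profileRemainder]
  linear_combination (lam - axisSin y) * hratio - (1 / 2) * axisDist_sq y

theorem xStar_apply_zero (lam : ℝ) : xStar d lam 0 = √(1 - lam ^ 2) := by
  simp [xStar, e_apply]

theorem xStar_mem_Delta (hlam : lam ∈ Ioo (-1) 1) : xStar d lam ∈ Delta d := by
  rw [Delta, mem_ofPred_eq, xStar_apply_zero]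
  exact ⟨sqrt_pos.2 (one_sub_sq_pos hlam), sqrt_le_one.2 (by linarith [sq_nonneg lam])⟩

theorem norm_xStar (hlam : lam ∈ Icc (-1) 1) : ‖xStar d lam‖ = 1 := by
  have hpos : 0 ≤ 1 - lam ^ 2 := by nlinarith [hlam.1, hlam.2]
  rw [← sq_eq_sq₀ (norm_nonneg _) zero_le_one, xStar, norm_add_sq_real, inner_smul_right, inner_e,
    norm_smul, norm_smul, norm_e, norm_e]
  simp [e_apply, sq_sqrt hpos]

theorem DR_xStar (hlam : lam ∈ Icc (-1) 1) : DR d lam (xStar d lam) = xStar d lam := by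
  rw [DR_eq, norm_xStar hlam, xStar_apply_zero]
  simp [xStar]

theorem F_xStar (hlam : lam ∈ Ico 0 1) : F d lam (xStar d lam) = profile lam lam := by
  have hlam' : lam ∈ Ioo (-1) 1 := ⟨by linarith [hlam.1], hlam.2⟩
  rw [F_eq_profile lam (xStar_mem_Delta hlam'), xStar_apply_zero,
    sq_sqrt (one_sub_sq_pos hlam').le, sub_sub_cancel, sqrt_sq hlam.1, xStar, add_sub_cancel_right,
    norm_smul, norm_e, mul_one, norm_eq_abs, sq_abs, sq_sqrt (one_sub_sq_pos hlam').le, sub_self,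
    mul_zero, zero_add]

theorem F_xStar_le (hlam : lam ∈ Ico 0 1) (hy : y ∈ Delta d) :
    F d lam (xStar d lam) ≤ F d lam y := by
  have hprofile : profile lam lam ≤ profile lam √(1 - y 0 ^ 2) := by
    rcases eq_or_ne √(1 - y 0 ^ 2) lam with heq | hne
    · rw [heq]
    · exact (profile_lt_profile hlam
        (sqrt_one_sub_apply_zero_sq_mem_Ico (Delta_subset_Hplus hy)) hne).le
  have haxis : y 1 ^ 2 ≤ axisDist y ^ 2 :=
    sq_le_sq.2 ((abs_apply_one_le_axisDist y).trans (le_abs_self _))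
  rw [F_xStar hlam, F_eq_profile lam hy, norm_sub_smul_e_sq]
  linarith [sq_nonneg (y 1 - lam), axisDist_sq y]

theorem norm_sub_xStar_sq (hy : y ∈ Delta d) (hs : √(1 - y 0 ^ 2) = lam) (ht : axisSin y = lam) :
    ‖y - xStar d lam‖ ^ 2 = 2 * (lam * (axisDist y - y 1)) := by
  have hzero : √(1 - lam ^ 2) = y 0 := hs ▸ sqrt_one_sub_sq_sqrt hy
  have hnorm : ‖y‖ = 1 := by
    have hpos := norm_pos_of_mem_Hplus (Delta_subset_Hplus hy)
    have hcos : y 0 = y 0 / ‖y‖ := by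
      rw [← sqrt_sq (div_nonneg hy.1.le hpos.le), ← one_sub_axisSin_sq hy.1, ht, hzero]
    rw [eq_div_iff hpos.ne'] at hcos
    exact mul_left_cancel₀ hy.1.ne' (hcos.trans (mul_one _).symm)
  have hdist : axisDist y = lam := by rw [← ht, axisSin, hnorm, div_one]
  have hsplit : y - xStar d lam = y - lam • e d 1 - y 0 • e d 0 := by
    rw [xStar, hzero]
    abel
  have hsq := axisDist_sq y
  rw [hdist, hnorm] at hsq
  have hcoord : (y - lam • e d 1) 0 = y 0 := by simp [e_apply]
  rw [hsplit, norm_sub_smul_e_sq, norm_sub_smul_e_sq, hcoord, hnorm, hdist]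
  linear_combination -hsq

theorem F_DR_lt (hlam : lam ∈ Ico 0 1) (hy : y ∈ Delta d) (hne : y ≠ xStar d lam) :
    F d lam (DR d lam y) < F d lam y := by
  have hyH := Delta_subset_Hplus hy
  have hangular : 0 ≤ lam * (axisDist y - y 1) :=
    mul_nonneg hlam.1 (sub_nonneg.2 ((le_abs_self _).trans (abs_apply_one_le_axisDist y)))
  rw [← sub_pos, F_sub_F_DR lam hy]
  by_cases hdeg : √(1 - y 0 ^ 2) = lam ∧ axisSin y = lam
  · obtain ⟨hs, ht⟩ := hdeg
    have hpos : 0 < ‖y - xStar d lam‖ ^ 2 := pow_pos (norm_pos_iff.2 (sub_ne_zero.2 hne)) 2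
    rw [norm_sub_xStar_sq hy hs ht] at hpos
    rw [hs, ht, profileRemainder_right_self lam ⟨by linarith [hlam.1], hlam.2⟩]
    linarith [sq_nonneg (lam - lam)]
  · exact add_pos_of_pos_of_nonneg (profileRemainder_add_half_sq_pos hlam (axisSin_mem_Ico hyH)
      (sqrt_one_sub_apply_zero_sq_mem_Ico hyH) hdeg) hangular

theorem F_DR_le (hlam : lam ∈ Ico 0 1) (hy : y ∈ Delta d) :
    F d lam (DR d lam y) ≤ F d lam y := by
  rcases eq_or_ne y (xStar d lam) with rfl | hne
  · rw [DR_xStar ⟨by linarith [hlam.1], hlam.2.le⟩]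
  · exact (F_DR_lt hlam hy hne).le

theorem continuousOn_DR (lam : ℝ) : ContinuousOn (DR d lam) (Hplus d) := by
  have hne : ∀ x ∈ Hplus d, ‖x‖ ≠ 0 := fun x hx => (norm_pos_of_mem_Hplus hx).ne'
  rw [funext (DR_eq lam)]
  fun_prop (disch := assumption)

theorem continuousOn_F (lam : ℝ) : ContinuousOn (F d lam) (Hplus d) := by
  have hne : ∀ x ∈ Hplus d, x 0 ≠ 0 := fun x hx => ne_of_gt hx
  have hne' : ∀ x ∈ Hplus d, 1 + √(1 - x 0 ^ 2) ≠ 0 := fun x _ => by positivity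
  unfold F
  fun_prop (disch := assumption)

theorem norm_sq_sub_log_le_F (hlam : lam ∈ Icc 0 1) (y : Euc d) :
    (1 / 2) * ‖y - lam • e d 1‖ ^ 2 + (lam - 1) * log (y 0) - log 2 ≤ F d lam y := by
  have hsqrt : √(1 - y 0 ^ 2) ≤ 1 := sqrt_le_one.2 (by linarith [sq_nonneg (y 0)])
  have hlog : lam * log (1 + √(1 - y 0 ^ 2)) ≤ 1 * log 2 :=
    mul_le_mul hlam.2 (log_le_log (by positivity) (by linarith))
      (log_nonneg (by linarith [sqrt_nonneg (1 - y 0 ^ 2)])) zero_le_one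
  rw [F]
  linarith [mul_nonneg hlam.1 (sqrt_nonneg (1 - y 0 ^ 2))]

theorem exists_forall_le_apply_zero_and_norm_sub_le (hlam : lam ∈ Ico 0 1) (b : ℝ) :
    ∃ m M : ℝ, 0 < m ∧ ∀ y ∈ Delta d, F d lam y ≤ b → m ≤ y 0 ∧ ‖y - lam • e d 1‖ ≤ M := by
  refine ⟨exp (-(b + log 2) / (1 - lam)), √(2 * (b + log 2)), exp_pos _, fun y hy hFb => ?_⟩
  have hbound := (norm_sq_sub_log_le_F (Ico_subset_Icc_self hlam) y).trans hFb
  constructor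
  · rw [← le_log_iff_exp_le hy.1, div_le_iff₀ (sub_pos.2 hlam.2)]
    linarith [sq_nonneg ‖y - lam • e d 1‖]
  · have hlog : 0 ≤ (lam - 1) * log (y 0) := mul_nonneg_of_nonpos_of_nonpos
      (sub_nonpos.2 hlam.2.le) (log_nonpos hy.1.le hy.2)
    exact le_sqrt_of_sq_le (by linarith)

theorem isCompact_sublevel_F (hlam : lam ∈ Ico 0 1) (b : ℝ) :
    IsCompact {y ∈ Delta d | F d lam y ≤ b} := by
  obtain ⟨m, M, hm, hbound⟩ := exists_forall_le_apply_zero_and_norm_sub_le (d := d) hlam b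
  let K : Set (Euc d) := closedBall (lam • e d 1) M ∩ {y | m ≤ y 0 ∧ y 0 ≤ 1}
  have hKDelta : K ⊆ Delta d := fun y hy => ⟨hm.trans_le hy.2.1, hy.2.2⟩
  have hK : IsCompact K := (isCompact_closedBall _ _).inter_right <|
    (isClosed_le (by fun_prop) (by fun_prop)).and (isClosed_le (by fun_prop) (by fun_prop))
  have hclosed : IsClosed (K ∩ F d lam ⁻¹' Iic b) :=
    ((continuousOn_F lam).mono (hKDelta.trans Delta_subset_Hplus)).preimage_isClosed_of_isClosed
      hK.isClosed isClosed_Iic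
  have heq : {y ∈ Delta d | F d lam y ≤ b} = K ∩ F d lam ⁻¹' Iic b :=
    Subset.antisymm (fun y hy => ⟨⟨mem_closedBall_iff_norm.2 (hbound y hy.1 hy.2).2,
      (hbound y hy.1 hy.2).1, hy.1.2⟩, hy.2⟩) fun y hy => ⟨hKDelta hy.1, hy.2⟩
  rw [heq]
  exact hK.of_isClosed_subset hclosed inter_subset_left

end Geometry

/-- For `λ ∈ [0,1)` there is a class-`KL` function `β` such that for every
`x ∈ H₊` and every `n ∈ ℕ`, `V(T^n x) ≤ β(V(x), n)`. -/
theorem stmt15 (d : ℕ) (lam : ℝ) (h0 : 0 ≤ lam) (h1 : lam < 1) :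
    ∃ β : ℝ → ℝ → ℝ, IsClassKL β ∧
      ∀ x ∈ Hplus d, ∀ n : ℕ, V d lam ((DR d lam)^[n] x) ≤ β (V d lam x) n := by
  have hlam : lam ∈ Ico 0 1 := ⟨h0, h1⟩
  obtain ⟨β, hβ, hle⟩ := exists_isClassKL_of_lyapunov (D := Delta d) (T := DR d lam)
    (W := fun y => F d lam y - F d lam (xStar d lam))
    (fun y hy => DR_mem_Delta lam (Delta_subset_Hplus hy))
    ((continuousOn_DR lam).mono Delta_subset_Hplus)
    (((continuousOn_F lam).mono Delta_subset_Hplus).sub continuousOn_const)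
    (fun y hy => sub_nonneg.2 (F_xStar_le hlam hy))
    (fun y hy => sub_le_sub_right (F_DR_le hlam hy) _)
    (fun y hy hpos => sub_lt_sub_right (F_DR_lt hlam hy (by rintro rfl; simp at hpos)) _)
    (fun b => by simpa only [sub_le_iff_le_add] using isCompact_sublevel_F hlam _)
  refine ⟨β, hβ, fun x hx n => ?_⟩
  rw [V, ← Function.iterate_succ_apply' (DR d lam), Function.iterate_succ_apply]
  exact hle _ (DR_mem_Delta lam hx) n
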